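/- Strict monotonicity of day addition: for all valid dates D1 and D2 and every integer n, if D1 < D2 then D1 +d n < D2 +d n. -/

import Mathlib

/-- A value is either a date `(y, m, d)` (a triple of integers in the
Gregorian calendar) or the error element `⊥`. -/
inductive DValue : Type
  | date (y m d : ℤ) : DValue
  | bot : DValue
deriving DecidableEq

/-- `nb_days(y, m)`: the number of days of month `m` in year `y`
(meaningful for `1 ≤ m ≤ 12`). A year is leap iff it is divisible by 4
and not by 100, or divisible by 400. -/
def nbDays (y m : ℤ) : ℤ :=
  if m = 2 then (if (4 ∣ y ∧ ¬ (100 ∣ y)) ∨ 400 ∣ y then 29 else 28)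
  else if m = 4 ∨ m = 6 ∨ m = 9 ∨ m = 11 then 30
  else 31

theorem nbDays_bounds (y m : ℤ) : 28 ≤ nbDays y m ∧ nbDays y m ≤ 31 := by
  unfold nbDays; split_ifs <;> omega

/-- A date `(y, m, d)` is valid iff `1 ≤ m ≤ 12` and `1 ≤ d ≤ nb_days(y, m)`. -/
def ValidDate (y m d : ℤ) : Prop :=
  1 ≤ m ∧ m ≤ 12 ∧ 1 ≤ d ∧ d ≤ nbDays y m

/-- Year addition: `(y,m,d) +y n = (y+n,m,d)`; `⊥ +y n = ⊥`. -/
def DValue.addY : DValue → ℤ → DValue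
  | .date y m d, n => .date (y + n) m d
  | .bot, _ => .bot

/-- Month addition on a date `(y, m, d)` (with `⊥` for a month component
outside `[1,12]`):
`(y,m,d) +m n = (y,m+n,d)` if `1 ≤ m+n ≤ 12`,
`= (y+1,m,d) +m (n−12)` if `m+n > 12`, `= (y−1,m,d) +m (n+12)` if `m+n < 1`. -/
def addMonths (y m d n : ℤ) : DValue :=
  if _h : 1 ≤ m ∧ m ≤ 12 then
    if _h1 : 1 ≤ m + n ∧ m + n ≤ 12 then .date y (m + n) d
    else if _h2 : 12 < m + n then addMonths (y + 1) m d (n - 12)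
    else addMonths (y - 1) m d (n + 12)
  else .bot
termination_by (m + n - 12).toNat + (1 - (m + n)).toNat
decreasing_by all_goals omega

/-- Month addition on values: `⊥ +m n = ⊥`. -/
def DValue.addM : DValue → ℤ → DValue
  | .date y m d, n => addMonths y m d n
  | .bot, _ => .bot

/-- Day addition, following the rules:
for `(y,m,d)` with `1 ≤ d ≤ nb_days(y,m)`:
`(y,m,d) +d n = (y,m,d+n)` if `1 ≤ d+n ≤ nb_days(y,m)`;
`= ((y,m,1) +m 1) +d (n − (nb_days(y,m) − d) − 1)` if `d+n > nb_days(y,m)`;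
`= (y,m,1) +d (d−1+n)` if `d+n ≤ 0` and `d > 1`;
if `n+1 ≤ 0` then, letting `(y',m',d') = (y,m,1) +m (−1)`,
`(y,m,1) +d n = (y',m',1) +d (n + nb_days(y',m'))`.
If `d < 1` or `d > nb_days(y,m)` (or the month is out of range), the result is `⊥`. -/
def addDays (y m d n : ℤ) : DValue :=
  if _hm : 1 ≤ m ∧ m ≤ 12 then
    if _hd : 1 ≤ d ∧ d ≤ nbDays y m then
      if _h1 : 1 ≤ d + n ∧ d + n ≤ nbDays y m then .date y m (d + n)
      else if _h2 : nbDays y m < d + n then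
        match addMonths y m 1 1 with
        | .date y' m' _ => addDays y' m' 1 (n - (nbDays y m - d) - 1)
        | .bot => .bot
      else if _h3 : 1 < d then addDays y m 1 (d - 1 + n)
      else
        match _hprev : addMonths y m 1 (-1) with
        | .date y' m' _ => addDays y' m' 1 (n + nbDays y' m')
        | .bot => .bot
    else .bot
  else .bot
termination_by (if 0 ≤ n then n else 62 - n).toNat
decreasing_by
  · split_ifs <;> omega
  · split_ifs <;> omega
  · have h28 := nbDays_bounds y' m'
    split_ifs <;> omega

/-- Day addition on values: `⊥ +d n = ⊥`. -/
def DValue.addD : DValue → ℤ → DValue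
  | .date y m d, n => addDays y m d n
  | .bot, _ => .bot

/-- Rounding modes: down (`↓`), up (`↑`) and error (`⊥`). -/
inductive RMode : Type
  | down | up | err
deriving DecidableEq

/-- Rounding `rnd_r`: if `1 ≤ d ≤ nb_days(y,m)` then `rnd_r(y,m,d) = (y,m,d)`;
if `d > nb_days(y,m)` then `rnd_↓(y,m,d) = (y,m,nb_days(y,m))`,
`rnd_↑(y,m,d) = (y',m',1)` where `(y',m',d') = (y,m,d) +m 1`, and
`rnd_⊥(y,m,d) = ⊥`; if `d < 1` then `rnd_r(y,m,d) = ⊥`; `rnd_r(⊥) = ⊥`. -/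
def rnd (r : RMode) : DValue → DValue
  | .date y m d =>
    if 1 ≤ d ∧ d ≤ nbDays y m then .date y m d
    else if d < 1 then .bot
    else
      match r with
      | .down => .date y m (nbDays y m)
      | .up =>
        match addMonths y m d 1 with
        | .date y' m' _ => .date y' m' 1
        | .bot => .bot
      | .err => .bot
  | .bot => .bot

/-- A period `(py, pm, pd)`: a number of years, months and days. -/
structure Period : Type where
  py : ℤ
  pm : ℤ
  pd : ℤ
deriving DecidableEq

/-- Derived addition of a period with rounding mode `r`:
`e +r (py, pm, pd) = rnd_r((e +y py) +m pm) +d pd`. -/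
def addPeriod (r : RMode) (e : DValue) (p : Period) : DValue :=
  ((rnd r ((e.addY p.py).addM p.pm)).addD p.pd)

/-- Strict lexicographic order on dates. -/
def DateLt (y1 m1 d1 y2 m2 d2 : ℤ) : Prop :=
  y1 < y2 ∨ (y1 = y2 ∧ (m1 < m2 ∨ (m1 = m2 ∧ d1 < d2)))

/-- Large lexicographic order on dates. -/
def DateLe (y1 m1 d1 y2 m2 d2 : ℤ) : Prop :=
  y1 < y2 ∨ (y1 = y2 ∧ (m1 < m2 ∨ (m1 = m2 ∧ d1 ≤ d2)))

/-- Comparison lifted to values: it holds only between two dates. -/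
def DValue.lt : DValue → DValue → Prop
  | .date y1 m1 d1, .date y2 m2 d2 => DateLt y1 m1 d1 y2 m2 d2
  | _, _ => False

/-- Comparison lifted to values: it holds only between two dates. -/
def DValue.le : DValue → DValue → Prop
  | .date y1 m1 d1, .date y2 m2 d2 => DateLe y1 m1 d1 y2 m2 d2
  | _, _ => False

/-- A value is a valid date: it is not `⊥` and its components are valid. -/
def IsValidDate : DValue → Prop
  | .date y m d => ValidDate y m d
  | .bot => False

def yearOf : DValue → ℤ
  | .date y _ _ => y
  | .bot => 0

def monthOf : DValue → ℤ
  | .date _ m _ => m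
  | .bot => 0

def dayOf : DValue → ℤ
  | .date _ _ d => d
  | .bot => 0

/-- Date units: year, month, day. -/
inductive DUnit : Type
  | year | month | day
deriving DecidableEq

/-- Addition of `n` units to a value. -/
def addU : DUnit → DValue → ℤ → DValue
  | .year, v, n => v.addY n
  | .month, v, n => v.addM n
  | .day, v, n => v.addD n

/-- Componentwise addition of periods. -/
def Period.add (p q : Period) : Period :=
  ⟨p.py + q.py, p.pm + q.pm, p.pd + q.pd⟩

/-!
Every valid date has a day number, the number of days from a fixed origin, obtained by summing month
lengths. Since every month is non-empty, the day number is strictly increasing for the lexicographic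
order on valid dates, hence it also reflects that order. Each rule defining `addDays` preserves
validity and the sum of the day number and of the remaining offset, so adding `n` days to a valid
date shifts its day number by `n`; and a translation of `ℤ` is strictly increasing.
-/

section SignedSum

open Finset

variable {M : Type*} [AddCommGroup M]

/-- The sum of `f` over the integers from `0` (included) to `k` (excluded), counted negatively when
`k < 0`: the primitive of `f` for the forward difference that vanishes at `0`. -/
noncomputable def signedSum (f : ℤ → M) (k : ℤ) : M :=
  ∑ i ∈ Ico 0 k, f i - ∑ i ∈ Ico k 0, f i

theorem signedSum_add_one (f : ℤ → M) (k : ℤ) :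
    signedSum f (k + 1) = signedSum f k + f k := by
  unfold signedSum
  rcases le_or_gt 0 k with hk | hk
  · rw [← sum_Ico_add_eq_sum_Ico_add_one hk, Ico_eq_empty_of_le hk,
      Ico_eq_empty_of_le (a := k + 1) (by lia)]
    abel
  · rw [← insert_Ico_add_one_left_eq_Ico hk, sum_insert (by simp), Ico_eq_empty_of_le hk.le,
      Ico_eq_empty_of_le (b := k + 1) (by lia)]
    abel

variable [PartialOrder M] [IsOrderedAddMonoid M] {f : ℤ → M}

theorem signedSum_monotone (hf : ∀ i, 0 ≤ f i) : Monotone (signedSum f) :=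
  monotone_int_of_le_succ fun k ↦ by
    rw [signedSum_add_one]
    exact le_add_of_nonneg_right (hf k)

theorem signedSum_add_lt_signedSum_add (hf : ∀ i, 0 ≤ f i) {i j : ℤ} {a b : M} (hij : i < j)
    (ha : a ≤ f i) (hb : 0 < b) : signedSum f i + a < signedSum f j + b :=
  calc
    signedSum f i + a ≤ signedSum f i + f i := by gcongr
    _ = signedSum f (i + 1) := (signedSum_add_one f i).symm
    _ ≤ signedSum f j := signedSum_monotone hf hij
    _ < signedSum f j + b := lt_add_of_pos_right _ hb

end SignedSum

/-- The position of month `m` of year `y` in the sequence of all months, January of year `0` having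
index `0`. -/
def monthIndex (y m : ℤ) : ℤ :=
  12 * y + (m - 1)

/-- The number of days of the month of index `k`. -/
def monthLength (k : ℤ) : ℤ :=
  nbDays (k / 12) (k % 12 + 1)

/-- The number of days elapsed between 31 December of year `-1` and the date `(y, m, d)`. -/
noncomputable def dayNumber (y m d : ℤ) : ℤ :=
  signedSum monthLength (monthIndex y m) + d

section DayNumber

variable {y m d n y' m' d' y₁ m₁ d₁ y₂ m₂ d₂ : ℤ}

theorem monthLength_nonneg (k : ℤ) : 0 ≤ monthLength k :=
  le_trans (by norm_num) (nbDays_bounds _ _).1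

theorem monthLength_monthIndex (hm : 1 ≤ m ∧ m ≤ 12) :
    monthLength (monthIndex y m) = nbDays y m := by
  have hyear : monthIndex y m / 12 = y := by unfold monthIndex; lia
  have hmonth : monthIndex y m % 12 + 1 = m := by unfold monthIndex; lia
  rw [monthLength, hyear, hmonth]

theorem dateLt_iff_monthIndex (hm₁ : 1 ≤ m₁ ∧ m₁ ≤ 12) (hm₂ : 1 ≤ m₂ ∧ m₂ ≤ 12) :
    DateLt y₁ m₁ d₁ y₂ m₂ d₂ ↔
      monthIndex y₁ m₁ < monthIndex y₂ m₂ ∨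
        monthIndex y₁ m₁ = monthIndex y₂ m₂ ∧ d₁ < d₂ := by
  unfold DateLt monthIndex
  lia

theorem dateLt_trichotomy (y₁ m₁ d₁ y₂ m₂ d₂ : ℤ) :
    DateLt y₁ m₁ d₁ y₂ m₂ d₂ ∨ (y₁ = y₂ ∧ m₁ = m₂ ∧ d₁ = d₂) ∨ DateLt y₂ m₂ d₂ y₁ m₁ d₁ := by
  unfold DateLt
  lia

theorem ValidDate.first_of_month (hm : 1 ≤ m ∧ m ≤ 12) : ValidDate y m 1 :=
  ⟨hm.1, hm.2, le_rfl, le_trans (by norm_num) (nbDays_bounds y m).1⟩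

theorem dayNumber_lt_of_dateLt (h₁ : ValidDate y₁ m₁ d₁) (h₂ : ValidDate y₂ m₂ d₂)
    (hlt : DateLt y₁ m₁ d₁ y₂ m₂ d₂) : dayNumber y₁ m₁ d₁ < dayNumber y₂ m₂ d₂ := by
  obtain ⟨hm₁, hm₁', -, hd₁⟩ := h₁
  obtain ⟨hm₂, hm₂', hd₂, -⟩ := h₂
  rcases (dateLt_iff_monthIndex ⟨hm₁, hm₁'⟩ ⟨hm₂, hm₂'⟩).1 hlt with hmonth | ⟨hmonth, hday⟩
  · rw [← monthLength_monthIndex ⟨hm₁, hm₁'⟩] at hd₁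
    exact signedSum_add_lt_signedSum_add monthLength_nonneg hmonth hd₁ hd₂
  · rw [dayNumber, dayNumber, hmonth]
    gcongr

theorem dayNumber_lt_dayNumber_iff (h₁ : ValidDate y₁ m₁ d₁) (h₂ : ValidDate y₂ m₂ d₂) :
    dayNumber y₁ m₁ d₁ < dayNumber y₂ m₂ d₂ ↔ DateLt y₁ m₁ d₁ y₂ m₂ d₂ := by
  refine ⟨fun hlt ↦ ?_, dayNumber_lt_of_dateLt h₁ h₂⟩
  rcases dateLt_trichotomy y₁ m₁ d₁ y₂ m₂ d₂ with hdate | ⟨rfl, rfl, rfl⟩ | hdate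
  · exact hdate
  · exact absurd hlt (lt_irrefl _)
  · exact absurd hlt (dayNumber_lt_of_dateLt h₂ h₁ hdate).asymm

theorem dayNumber_of_monthIndex_eq_add_one (hm : 1 ≤ m ∧ m ≤ 12)
    (hnext : monthIndex y' m' = monthIndex y m + 1) :
    dayNumber y' m' d = dayNumber y m d + nbDays y m := by
  rw [dayNumber, dayNumber, hnext, signedSum_add_one, monthLength_monthIndex hm]
  ring

theorem addMonths_eq (hm : 1 ≤ m ∧ m ≤ 12) :
    addMonths y m d n =
      .date ((monthIndex y m + n) / 12) ((monthIndex y m + n) % 12 + 1) d := by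
  fun_induction addMonths y m d n with
  | case1 y n _ hrange =>
    congr 1 <;> unfold monthIndex <;> lia
  | case2 y n _ _ _ ih =>
    have hindex : monthIndex (y + 1) m + (n - 12) = monthIndex y m + n := by
      unfold monthIndex; ring
    rw [ih, hindex]
  | case3 y n _ _ _ ih =>
    have hindex : monthIndex (y - 1) m + (n + 12) = monthIndex y m + n := by
      unfold monthIndex; ring
    rw [ih, hindex]
  | case4 y n hm' => exact absurd hm hm'

theorem addMonths_ne_bot (hm : 1 ≤ m ∧ m ≤ 12) : addMonths y m d n ≠ .bot := by
  simp [addMonths_eq hm]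

theorem month_bounds_of_addMonths_eq_date (hm : 1 ≤ m ∧ m ≤ 12)
    (h : addMonths y m d n = .date y' m' d') : 1 ≤ m' ∧ m' ≤ 12 := by
  rw [addMonths_eq hm] at h
  obtain ⟨-, rfl, -⟩ := DValue.date.inj h
  lia

theorem monthIndex_of_addMonths_eq_date (hm : 1 ≤ m ∧ m ≤ 12)
    (h : addMonths y m d n = .date y' m' d') : monthIndex y' m' = monthIndex y m + n := by
  rw [addMonths_eq hm] at h
  obtain ⟨rfl, rfl, -⟩ := DValue.date.inj h
  rw [monthIndex, add_sub_cancel_right, Int.mul_ediv_add_emod]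

theorem exists_addDays_eq_date (h : ValidDate y m d) (n : ℤ) :
    ∃ y' m' d', addDays y m d n = .date y' m' d' ∧ ValidDate y' m' d' ∧
      dayNumber y' m' d' = dayNumber y m d + n := by
  fun_induction addDays y m d n with
  | case1 y m d n hm _ hsame =>
    exact ⟨y, m, d + n, rfl, ⟨hm.1, hm.2, hsame⟩, (add_assoc _ _ _).symm⟩
  | case2 y m d n hm _ _ _ y' m' _ hnext ih =>
    have hm' := month_bounds_of_addMonths_eq_date hm hnext
    have hindex := monthIndex_of_addMonths_eq_date hm hnext
    obtain ⟨y'', m'', d'', heq, hvalid, hnumber⟩ := ih (.first_of_month hm')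
    refine ⟨y'', m'', d'', heq, hvalid, ?_⟩
    rw [hnumber, dayNumber_of_monthIndex_eq_add_one hm hindex]
    unfold dayNumber
    ring
  | case3 y m d n hm _ _ _ hbot => exact absurd hbot (addMonths_ne_bot hm)
  | case4 y m d n hm _ _ _ _ ih =>
    obtain ⟨y'', m'', d'', heq, hvalid, hnumber⟩ := ih (.first_of_month hm)
    refine ⟨y'', m'', d'', heq, hvalid, ?_⟩
    rw [hnumber]
    unfold dayNumber
    ring
  | case5 y m d n hm hd _ _ hfirst y' m' _ hprev ih =>
    obtain rfl : d = 1 := by lia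
    have hm' := month_bounds_of_addMonths_eq_date hm hprev
    have hindex := monthIndex_of_addMonths_eq_date hm hprev
    obtain ⟨y'', m'', d'', heq, hvalid, hnumber⟩ := ih (.first_of_month hm')
    refine ⟨y'', m'', d'', heq, hvalid, ?_⟩
    rw [hnumber, dayNumber_of_monthIndex_eq_add_one hm' (eq_add_of_sub_eq hindex.symm)]
    ring
  | case6 y m d n hm _ _ _ _ hbot => exact absurd hbot (addMonths_ne_bot hm)
  | case7 y m d n _ hd => exact absurd h.2.2 hd
  | case8 y m d n hm => exact absurd ⟨h.1, h.2.1⟩ hm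

end DayNumber

/-- **Strict monotonicity of day addition**: for all valid dates `D1 < D2` and
every integer `n`, `D1 +d n < D2 +d n`. -/
theorem strict_monotonicity_day (y1 m1 d1 y2 m2 d2 n : ℤ)
    (h1 : ValidDate y1 m1 d1) (h2 : ValidDate y2 m2 d2)
    (hlt : DateLt y1 m1 d1 y2 m2 d2) :
    DValue.lt (addDays y1 m1 d1 n) (addDays y2 m2 d2 n) := by
  obtain ⟨y1', m1', d1', heq1, hvalid1, hnumber1⟩ := exists_addDays_eq_date h1 n
  obtain ⟨y2', m2', d2', heq2, hvalid2, hnumber2⟩ := exists_addDays_eq_date h2 n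
  rw [heq1, heq2, DValue.lt, ← dayNumber_lt_dayNumber_iff hvalid1 hvalid2, hnumber1, hnumber2]
  gcongr
  exact dayNumber_lt_of_dateLt h1 h2 hlt
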